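/- arXiv:math/0411347 — 2 statements merged into one kernel-verified Lean document; each statement's English description precedes it below -/
import Mathlib

section
/- F carries the universal example of a homomorphism that is idempotent up to conjugacy: if G is any group, ψ : G → G is a group endomorphism, and y₀ ∈ G satisfies ψ(ψ(g)) = y₀⁻¹ · ψ(g) · y₀ for all g ∈ G, then there exists a group homomorphism h : F → G with h(x_n) = ψ^[n](y₀) (the n-th iterate of ψ applied to y₀) for every n ≥ 0. -/
/-- The defining relations of Thompson's group `F`:
`xᵢ⁻¹ xₙ xᵢ xₙ₊₁⁻¹` for all natural numbers `i < n`. -/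
def thompsonRels : Set (FreeGroup ℕ) :=
  {r | ∃ i n : ℕ, i < n ∧
    r = (FreeGroup.of i)⁻¹ * FreeGroup.of n * FreeGroup.of i * (FreeGroup.of (n + 1))⁻¹}

/-- Thompson's group `F`. -/
abbrev ThompsonF : Type := PresentedGroup thompsonRels

/-- The image of the `n`-th generator in Thompson's group `F`. -/
def x (n : ℕ) : ThompsonF := PresentedGroup.of n

namespace ThompsonF

variable {G : Type*} [Group G]

theorem freeGroup_lift_eq_one_of_mem_thompsonRels {y : ℕ → G}
    (hy : ∀ ⦃i n : ℕ⦄, i < n → SemiconjBy (y i) (y (n + 1)) (y n))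
    {r : FreeGroup ℕ} (hr : r ∈ thompsonRels) : FreeGroup.lift y r = 1 := by
  obtain ⟨i, n, hin, rfl⟩ := hr
  simp only [map_mul, map_inv, FreeGroup.lift_apply_of]
  rw [mul_inv_eq_one, mul_assoc, inv_mul_eq_iff_eq_mul]
  exact (hy hin).eq.symm

/-- The universal property of `F`: the homomorphism sending `xₙ` to `y n`, for a sequence `y`
satisfying Thompson's relations. `SemiconjBy` states them without inverses, as
`y i * y (n + 1) = y n * y i`. -/
def lift (y : ℕ → G) (hy : ∀ ⦃i n : ℕ⦄, i < n → SemiconjBy (y i) (y (n + 1)) (y n)) :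
    ThompsonF →* G :=
  PresentedGroup.toGroup fun _ => freeGroup_lift_eq_one_of_mem_thompsonRels hy

@[simp]
theorem lift_x (y : ℕ → G) (hy : ∀ ⦃i n : ℕ⦄, i < n → SemiconjBy (y i) (y (n + 1)) (y n))
    (n : ℕ) : lift y hy (x n) = y n :=
  PresentedGroup.toGroup.of _

end ThompsonF

/- Applying `ψ^[i]` to the relation for the pair `(0, n - i)` gives the one for `(i, n)`. -/
theorem semiconjBy_iterate_of_lt {M F : Type*} [Mul M] [FunLike F M M] [MulHomClass F M M]
    (ψ : F) {y : M} (hy : ∀ k : ℕ, SemiconjBy y (ψ^[k + 2] y) (ψ^[k + 1] y))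
    {i n : ℕ} (hin : i < n) : SemiconjBy (ψ^[i] y) (ψ^[n + 1] y) (ψ^[n] y) := by
  obtain ⟨k, rfl⟩ := Nat.exists_eq_add_of_lt hin
  have translated := congrArg ψ^[i] (hy k).eq
  simpa only [SemiconjBy, iterate_map_mul, ← Function.iterate_add_apply, add_assoc]
    using translated

/-- `F` carries the universal example of a homomorphism that is idempotent up to conjugacy:
given any group `G`, an endomorphism `ψ : G →* G` and `y₀ ∈ G` with
`ψ(ψ(g)) = y₀⁻¹ · ψ(g) · y₀` for all `g`, there is a homomorphism `h : F →* G` with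
`h(xₙ) = ψ^[n](y₀)` for all `n`. -/
theorem thompsonF_universal_conjugacy_idempotent (G : Type*) [Group G]
    (ψ : G →* G) (y₀ : G) (hψ : ∀ g : G, ψ (ψ g) = y₀⁻¹ * ψ g * y₀) :
    ∃ h : ThompsonF →* G, ∀ n : ℕ, h (x n) = (⇑ψ)^[n] y₀ := by
  have hy (k : ℕ) : SemiconjBy y₀ ((⇑ψ)^[k + 2] y₀) ((⇑ψ)^[k + 1] y₀) := by
    rw [Function.iterate_succ_apply', Function.iterate_succ_apply', SemiconjBy, hψ]
    group
  exact ⟨ThompsonF.lift _ fun _ _ => semiconjBy_iterate_of_lt ψ hy, ThompsonF.lift_x _ _⟩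
end

section
/- The commutator subgroup F' of Thompson's group F is not finitely generated. -/
/-!
`F` acts on the line by increasing piecewise linear homeomorphisms which near `+∞` are translations,
and the translation length is a homomorphism to an abelian group. Each element of `F'` therefore
fixes a neighbourhood of `+∞` pointwise. If `F'` were finitely generated, a single neighbourhood of
`+∞` would be fixed by all of `F'`; but `xₙ⁻¹ xₙ₊₁ ∈ F'` moves the point `n + 1` for every `n ≥ 1`.
-/

open Filter MulAction
open scoped commutatorElement

theorem eventually_le_stabilizer_of_fg {G α : Type*} [Group G] [MulAction G α]
    {l : Filter α} {H : Subgroup G} (hH : H.FG) (hfix : ∀ g ∈ H, ∀ᶠ a in l, g • a = a) :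
    ∀ᶠ a in l, H ≤ stabilizer G a := by
  obtain ⟨S, rfl⟩ := hH
  have hS : ∀ᶠ a in l, ∀ g ∈ S, g • a = a :=
    (eventually_all_finset S).2 fun g hg => hfix g (Subgroup.subset_closure hg)
  filter_upwards [hS] with a ha
  exact (Subgroup.closure_le _).2 ha

/-- The group of pairs `(f, c)` such that the order automorphism `f` agrees with translation by `c`
near `+∞`. Recording `c` along with `f` makes translation length a coordinate, so that it is
multiplicative without having to be chosen. -/
def translationAtTop (A : Type*) [AddGroup A] [Preorder A] :
    Subgroup ((A ≃o A) × Multiplicative A) where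
  carrier := {p | ∀ᶠ t in atTop, p.1 t = p.2.toAdd + t}
  one_mem' := by simp
  mul_mem' := by
    rintro ⟨f, c⟩ ⟨g, d⟩ hf hg
    filter_upwards [hg, g.tendsto_atTop.eventually hf] with t hgt hft
    calc f (g t) = c.toAdd + g t := hft
      _ = (c * d).toAdd + t := by rw [hgt, toAdd_mul, add_assoc]
  inv_mem' := by
    rintro ⟨f, c⟩ hf
    filter_upwards [f.symm.tendsto_atTop.eventually hf] with t hft
    calc f.symm t = -c.toAdd + (c.toAdd + f.symm t) := (neg_add_cancel_left _ _).symm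
      _ = -c.toAdd + t := by rw [← hft, f.apply_symm_apply]

/-- The increasing piecewise linear homeomorphism of the line that is the identity up to `a`, has
slope `1 / 2` on `[a, a + 2]`, and is translation by `-1` from `a + 2` on. -/
noncomputable def contraction (a : ℝ) : ℝ ≃o ℝ :=
  StrictMono.orderIsoOfRightInverse
    (fun t => if t ≤ a then t else if t ≤ a + 2 then (t + a) / 2 else t - 1)
    (fun s t hst => by dsimp only; split_ifs <;> linarith)
    (fun s => if s ≤ a then s else if s ≤ a + 1 then 2 * s - a else s + 1)
    (fun s => by dsimp only; split_ifs <;> linarith)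

theorem contraction_apply (a t : ℝ) :
    contraction a t = if t ≤ a then t else if t ≤ a + 2 then (t + a) / 2 else t - 1 :=
  rfl

theorem contraction_apply_of_le {a t : ℝ} (h : t ≤ a) : contraction a t = t :=
  if_pos h

theorem contraction_apply_lt {a t : ℝ} (h : a < t) : contraction a t < t := by
  rw [contraction_apply]
  split_ifs <;> linarith

theorem eventually_contraction_apply (a : ℝ) : ∀ᶠ t in atTop, contraction a t = -1 + t := by
  filter_upwards [eventually_gt_atTop (a + 2)] with t ht
  rw [contraction_apply, if_neg (by linarith), if_neg ht.not_ge, neg_add_eq_sub]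

theorem contraction_mul_contraction {a b : ℝ} (h : a + 1 ≤ b) :
    contraction b * contraction a = contraction a * contraction (b + 1) := by
  ext t
  simp only [RelIso.mul_apply, contraction_apply]
  split_ifs <;> linarith

namespace ThompsonF

theorem x_mul_x {i n : ℕ} (h : i < n) : x n * x i = x i * x (n + 1) := by
  have hrel : (x i)⁻¹ * x n * x i * (x (n + 1))⁻¹ = 1 :=
    PresentedGroup.one_of_mem (rels := thompsonRels) ⟨i, n, h, rfl⟩
  rwa [mul_inv_eq_one, mul_assoc, inv_mul_eq_iff_eq_mul] at hrel

theorem x_inv_mul_x_succ_mem_commutator {n : ℕ} (hn : 0 < n) :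
    (x n)⁻¹ * x (n + 1) ∈ commutator ThompsonF := by
  have hcomm : (x n)⁻¹ * x (n + 1) = ⁅(x n)⁻¹, (x 0)⁻¹⁆ := by
    rw [eq_inv_mul_of_mul_eq (x_mul_x hn).symm, commutatorElement_def, inv_inv, inv_inv]
    simp only [mul_assoc]
  rw [hcomm]
  exact Subgroup.commutator_mem_commutator (Subgroup.mem_top _) (Subgroup.mem_top _)

/-- The piecewise linear action of `F` on `[0, ∞)`, extended by the identity to the line. Since
automorphisms compose as functions, the relations hold for contracting generators, the inverses of
the expanding maps that satisfy them under composition from left to right. -/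
noncomputable def toOrderIso : ThompsonF →* (ℝ ≃o ℝ) :=
  PresentedGroup.toGroup (f := fun n : ℕ => contraction n) <| by
    rintro _ ⟨i, n, h, rfl⟩
    have hin : (i : ℝ) + 1 ≤ n := by exact_mod_cast h
    simp only [map_mul, map_inv, FreeGroup.lift_apply_of]
    rw [mul_inv_eq_one, mul_assoc, inv_mul_eq_iff_eq_mul, contraction_mul_contraction hin,
      Nat.cast_succ]

theorem toOrderIso_x (n : ℕ) : toOrderIso (x n) = contraction n :=
  PresentedGroup.toGroup.of _

noncomputable instance : MulAction ThompsonF ℝ :=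
  MulAction.compHom ℝ toOrderIso

theorem smul_def (w : ThompsonF) (t : ℝ) : w • t = toOrderIso w t :=
  rfl

theorem x_smul (n : ℕ) (t : ℝ) : x n • t = contraction n t := by
  rw [smul_def, toOrderIso_x]

/-- The homomorphism giving the translation length near `+∞` in the action `toOrderIso`. -/
def translationLength : ThompsonF →* Multiplicative ℝ :=
  PresentedGroup.toGroup (f := fun _ : ℕ => .ofAdd (-1)) <| by
    rintro _ ⟨i, n, -, rfl⟩
    simp

theorem translationLength_x (n : ℕ) : translationLength (x n) = .ofAdd (-1) :=
  PresentedGroup.toGroup.of _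

theorem prod_mem_translationAtTop (w : ThompsonF) :
    (toOrderIso w, translationLength w) ∈ translationAtTop ℝ := by
  refine PresentedGroup.generated_by thompsonRels
    ((translationAtTop ℝ).comap (toOrderIso.prod translationLength)) (fun n => ?_) w
  change (toOrderIso (x n), translationLength (x n)) ∈ translationAtTop ℝ
  rw [toOrderIso_x, translationLength_x]
  exact eventually_contraction_apply n

theorem eventually_smul_eq_self {w : ThompsonF} (hw : w ∈ commutator ThompsonF) :
    ∀ᶠ t : ℝ in atTop, w • t = t := by
  have hlength : translationLength w = 1 :=
    Abelianization.commutator_subset_ker translationLength hw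
  filter_upwards [prod_mem_translationAtTop w] with t ht
  rwa [hlength, toAdd_one, zero_add] at ht

theorem x_inv_mul_x_succ_smul_ne (n : ℕ) :
    ((x n)⁻¹ * x (n + 1)) • ((n : ℝ) + 1) ≠ n + 1 := by
  rw [mul_smul, x_smul, contraction_apply_of_le (Nat.cast_succ n).ge, Ne, inv_smul_eq_iff, x_smul]
  exact (contraction_apply_lt (lt_add_one (n : ℝ))).ne'

end ThompsonF

/-- The commutator subgroup of Thompson's group `F` is not finitely generated. -/
theorem thompsonF_commutator_not_fg :
    ¬ Subgroup.FG (commutator ThompsonF) := by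
  intro hfg
  have hfix : ∀ᶠ t : ℝ in atTop, commutator ThompsonF ≤ stabilizer ThompsonF t :=
    eventually_le_stabilizer_of_fg hfg fun _ => ThompsonF.eventually_smul_eq_self
  have hlarge : Tendsto (fun n : ℕ => (n : ℝ) + 1) atTop atTop :=
    tendsto_atTop_add_const_right _ _ tendsto_natCast_atTop_atTop
  obtain ⟨n, hn, hpos⟩ := ((hlarge.eventually hfix).and (eventually_gt_atTop 0)).exists
  exact ThompsonF.x_inv_mul_x_succ_smul_ne n
    (hn (ThompsonF.x_inv_mul_x_succ_mem_commutator hpos))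
end
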